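/- Assume $\mathrm{char}(k) \ne 2$ and let $N \ge 1$. The complex $C$ satisfies $d \circ d = 0$, and its cohomology is: $H^0(C) \cong k[x]/(x^N)$; $H^{-m}(C) = 0$ for all odd $m \ge 1$; and $H^{-m}(C) \cong k[x]/(x^N)$ for all even $m \ge 2$. (This is the cohomology of the derived contraction algebra of the Pagoda flop $uv = (y+x^N)(y-x^N)$, matching the model $k[x,\zeta]$, $d\zeta = x^N$.) -/

import Mathlib

open MvPolynomial

noncomputable section

/-- `S = k[x,y]`, with `x = X 0` and `y = X 1`. -/
abbrev Sk (k : Type) [Field k] : Type := MvPolynomial (Fin 2) k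

/-- `f = y + x^N`. -/
def fP (k : Type) [Field k] (N : ℕ) : Sk k := X 1 + (X 0) ^ N

/-- `g = y - x^N`. -/
def gP (k : Type) [Field k] (N : ℕ) : Sk k := X 1 - (X 0) ^ N

/-- The differential `d : C^{-1} → C^0`, `(p, q) ↦ p·f + q·g`
(corresponding to `dα = f`, `dβ = g`). -/
def d1 (k : Type) [Field k] (N : ℕ) : Sk k × Sk k →ₗ[Sk k] Sk k :=
  fP k N • LinearMap.fst (Sk k) (Sk k) (Sk k) +
    gP k N • LinearMap.snd (Sk k) (Sk k) (Sk k)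

/-- The differential `C^{-m} → C^{-m+1}` for even `m ≥ 2`, in the bases
`(w_m^α, w_m^β)`, `(w_{m-1}^α, w_{m-1}^β)`:
`d(w^α) = f·w^β - g·w^α` and `d(w^β) = g·w^α - f·w^β`. -/
def dEven (k : Type) [Field k] (N : ℕ) : Sk k × Sk k →ₗ[Sk k] Sk k × Sk k :=
  LinearMap.prod
    ((-gP k N) • LinearMap.fst (Sk k) (Sk k) (Sk k) +
      gP k N • LinearMap.snd (Sk k) (Sk k) (Sk k))
    (fP k N • LinearMap.fst (Sk k) (Sk k) (Sk k) +
      (-fP k N) • LinearMap.snd (Sk k) (Sk k) (Sk k))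

/-- The differential `C^{-m} → C^{-m+1}` for odd `m ≥ 3`:
`d(w^α) = f·(w^α + w^β)` and `d(w^β) = g·(w^α + w^β)`. -/
def dOdd (k : Type) [Field k] (N : ℕ) : Sk k × Sk k →ₗ[Sk k] Sk k × Sk k :=
  LinearMap.prod
    (fP k N • LinearMap.fst (Sk k) (Sk k) (Sk k) +
      gP k N • LinearMap.snd (Sk k) (Sk k) (Sk k))
    (fP k N • LinearMap.fst (Sk k) (Sk k) (Sk k) +
      gP k N • LinearMap.snd (Sk k) (Sk k) (Sk k))

/-- The differential `D m : C^{-m} → C^{-m+1}` for `m ≥ 2`. -/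
def D (k : Type) [Field k] (N : ℕ) (m : ℕ) : Sk k × Sk k →ₗ[Sk k] Sk k × Sk k :=
  if Even m then dEven k N else dOdd k N

/-- `k[x]/(x^N)`. -/
abbrev Qmod (k : Type) [Field k] (N : ℕ) : Type :=
  Polynomial k ⧸ Ideal.span {(Polynomial.X : Polynomial k) ^ N}

/-!
The complex is a splice of two kinds of exact sequences: writing `δ (p, q) = p - q` and
`Δ s = (s, s)`, every even differential factors as the Koszul map `s ↦ (-g s, f s)` after `δ`, and
every odd one as `Δ` after the Koszul map `(p, q) ↦ f p + g q`.
If `g, f` is a weakly regular sequence, then the Koszul relations generate the odd cycles, while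
the even cycles are the kernel of `δ`, i.e. the diagonal `Δ S ≅ S`, in which the boundaries
correspond to the ideal `(f, g)`.

For `f = y + h(x)` and `g = y - h(x)`, substituting `y = h` kills exactly `(g)` and sends `f` to
`2h`, which gives weak regularity; and since `2` is invertible, `(f, g) = (h, y)`, so the remaining
cohomology is `k[x]/(h)`.
-/

open scoped Polynomial

section WordComplex

open RingTheory.Sequence

variable {S : Type*} [CommRing S]

lemma isWeaklyRegular_pair_iff {r s : S} :
    IsWeaklyRegular S [r, s] ↔ IsSMulRegular S r ∧ ∀ a, r ∣ s * a → r ∣ a := by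
  rw [isWeaklyRegular_cons_iff, isWeaklyRegular_singleton_iff,
    isSMulRegular_quotient_iff_mem_of_smul_mem]
  simp only [Submodule.mem_smul_pointwise_iff_exists, Submodule.mem_top, true_and, smul_eq_mul,
    dvd_def, eq_comm]

lemma isWeaklyRegular_pair_of_ker_eq_span {T : Type*} [CommRing T] {φ : S →+* T} {r s : S}
    (hr : IsSMulRegular S r) (hφ : RingHom.ker φ = Ideal.span {r}) (hs : IsSMulRegular T (φ s)) :
    IsWeaklyRegular S [r, s] := by
  have dvd_iff (a : S) : r ∣ a ↔ φ a = 0 := by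
    rw [← Ideal.mem_span_singleton, ← hφ, RingHom.mem_ker]
  refine isWeaklyRegular_pair_iff.2 ⟨hr, fun a ha ↦ ?_⟩
  rw [dvd_iff, map_mul] at ha
  exact (dvd_iff a).2 (hs.right_eq_zero_of_smul ha)

lemma span_add_sub_eq_span_pair {a b : S} (h2 : IsUnit (2 : S)) :
    Ideal.span {a + b, a - b} = Ideal.span {b, a} := by
  obtain ⟨c, hc⟩ := h2.exists_left_inv
  refine le_antisymm (Ideal.span_le.2 ?_) (Ideal.span_le.2 ?_) <;>
    simp only [Set.pair_subset_iff, SetLike.mem_coe, Ideal.mem_span_pair]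
  · exact ⟨⟨1, 1, by ring⟩, ⟨-1, 1, by ring⟩⟩
  · exact ⟨⟨c, -c, by linear_combination b * hc⟩, ⟨c, c, by linear_combination a * hc⟩⟩

variable (f g : S)

/-- The differential `S² → S` of the Koszul complex of `(f, g)`; it is also the differential
`C⁻¹ → C⁰` of the complex of alternating words. -/
def koszulD₁ : S × S →ₗ[S] S := f • LinearMap.fst S S S + g • LinearMap.snd S S S

/-- The differential `S → S²` of the Koszul complex of `(f, g)`. -/
def koszulD₂ : S →ₗ[S] S × S := LinearMap.prod (-g • LinearMap.id) (f • LinearMap.id)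

/-- The differential `C⁻ᵐ → C⁻ᵐ⁺¹`, for `m ≥ 2`, of the DG-algebra `S⟨α, β⟩/(α², β²)` with
`dα = f` and `dβ = g`, in the bases of alternating words, factored through `S`. -/
def wordD (m : ℕ) : S × S →ₗ[S] S × S :=
  if Even m then koszulD₂ f g ∘ₗ (LinearMap.fst S S S - LinearMap.snd S S S)
  else LinearMap.prod LinearMap.id LinearMap.id ∘ₗ koszulD₁ f g

variable {f g} {m : ℕ}

lemma koszulD₁_apply (p : S × S) : koszulD₁ f g p = f * p.1 + g * p.2 := rfl

lemma koszulD₂_apply (s : S) : koszulD₂ f g s = (-g * s, f * s) := rfl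

lemma wordD_of_even (hm : Even m) :
    wordD f g m = koszulD₂ f g ∘ₗ (LinearMap.fst S S S - LinearMap.snd S S S) := if_pos hm

lemma wordD_of_odd (hm : Odd m) :
    wordD f g m = LinearMap.prod LinearMap.id LinearMap.id ∘ₗ koszulD₁ f g :=
  if_neg (Nat.not_even_iff_odd.2 hm)

lemma koszulD₁_comp_koszulD₂ : koszulD₁ f g ∘ₗ koszulD₂ f g = 0 := by
  ext
  simp only [LinearMap.comp_apply, koszulD₁_apply, koszulD₂_apply, LinearMap.zero_apply]
  ring

lemma koszulD₁_comp_wordD_of_even (hm : Even m) : koszulD₁ f g ∘ₗ wordD f g m = 0 := by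
  rw [wordD_of_even hm, ← LinearMap.comp_assoc, koszulD₁_comp_koszulD₂, LinearMap.zero_comp]

lemma wordD_comp_wordD (m : ℕ) : wordD f g m ∘ₗ wordD f g (m + 1) = 0 := by
  rcases m.even_or_odd with hm | hm
  · have sub_comp_diag : (LinearMap.fst S S S - LinearMap.snd S S S) ∘ₗ
        LinearMap.prod LinearMap.id LinearMap.id = 0 := by ext; simp
    rw [wordD_of_even hm, wordD_of_odd hm.add_one, LinearMap.comp_assoc,
      ← LinearMap.comp_assoc (koszulD₁ f g), sub_comp_diag, LinearMap.zero_comp,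
      LinearMap.comp_zero]
  · rw [wordD_of_odd hm, LinearMap.comp_assoc, koszulD₁_comp_wordD_of_even hm.add_one,
      LinearMap.comp_zero]

lemma range_koszulD₁ : LinearMap.range (koszulD₁ f g) = Ideal.span {f, g} := by
  ext s
  simp only [LinearMap.mem_range, koszulD₁_apply, Prod.exists, Ideal.mem_span_pair, mul_comm]

lemma ker_koszulD₁ (hgf : IsWeaklyRegular S [g, f]) :
    LinearMap.ker (koszulD₁ f g) = LinearMap.range (koszulD₂ f g) := by
  refine le_antisymm ?_ (LinearMap.range_le_ker_iff.2 koszulD₁_comp_koszulD₂)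
  rintro ⟨p, q⟩ hpq
  replace hpq : f * p + g * q = 0 := hpq
  obtain ⟨hg, hf⟩ := isWeaklyRegular_pair_iff.1 hgf
  obtain ⟨r, rfl⟩ : g ∣ p := hf p ⟨-q, by linear_combination hpq⟩
  have hq : q = -(f * r) := hg (show g * q = g * -(f * r) by linear_combination hpq)
  exact ⟨-r, by simp [koszulD₂_apply, hq]⟩

lemma ker_koszulD₂ (hg : IsSMulRegular S g) : LinearMap.ker (koszulD₂ f g) = ⊥ := by
  refine LinearMap.ker_eq_bot'.2 fun s hs ↦ hg.right_eq_zero_of_smul ?_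
  simpa [koszulD₂_apply] using congrArg Prod.fst hs

lemma range_wordD_of_even (hm : Even m) :
    LinearMap.range (wordD f g m) = LinearMap.range (koszulD₂ f g) := by
  rw [wordD_of_even hm]
  exact LinearMap.range_comp_of_range_eq_top _ (LinearMap.range_eq_top.2 fun s ↦ ⟨(s, 0), by simp⟩)

lemma ker_wordD_of_odd (hm : Odd m) :
    LinearMap.ker (wordD f g m) = LinearMap.ker (koszulD₁ f g) := by
  rw [wordD_of_odd hm]
  exact LinearMap.ker_comp_of_ker_eq_bot _ (by simp)

lemma ker_wordD_of_even (hg : IsSMulRegular S g) (hm : Even m) :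
    LinearMap.ker (wordD f g m) =
      LinearMap.range (LinearMap.prod LinearMap.id LinearMap.id : S →ₗ[S] S × S) := by
  rw [wordD_of_even hm, LinearMap.ker_comp_of_ker_eq_bot _ (ker_koszulD₂ hg)]
  ext ⟨p, q⟩
  simp [sub_eq_zero]

/-- The isomorphism `S/(f, g) ≅ H⁻ᵐ` for even `m ≥ 2`, induced by the diagonal `S → S²`. -/
def quotientEquivEvenCohomology (hg : IsSMulRegular S g) (hm : Even m) :
    (S ⧸ LinearMap.range (koszulD₁ f g)) ≃ₗ[S]
      LinearMap.ker (wordD f g m) ⧸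
        (LinearMap.range (wordD f g (m + 1))).comap (LinearMap.ker (wordD f g m)).subtype :=
  let Δ : S →ₗ[S] S × S := LinearMap.prod LinearMap.id LinearMap.id
  let e : S ≃ₗ[S] LinearMap.ker (wordD f g m) :=
    (LinearEquiv.ofInjective Δ fun _ _ h ↦ congrArg Prod.fst h).trans
      (LinearEquiv.ofEq _ _ (ker_wordD_of_even hg hm).symm)
  Submodule.Quotient.equiv _ _ e <| by
    have subtype_comp_e : (LinearMap.ker (wordD f g m)).subtype ∘ₗ e.toLinearMap = Δ := rfl
    have boundaries_le_cycles : LinearMap.range (wordD f g (m + 1)) ≤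
        LinearMap.ker (wordD f g m) := LinearMap.range_le_ker_iff.2 (wordD_comp_wordD m)
    apply Submodule.map_injective_of_injective (Submodule.subtype_injective _)
    rw [← Submodule.map_comp, subtype_comp_e, Submodule.map_comap_subtype,
      inf_eq_right.2 boundaries_le_cycles, wordD_of_odd hm.add_one, LinearMap.range_comp]

end WordComplex

section Pagoda

open RingTheory.Sequence

variable {R : Type*} [CommRing R]

/-- The inclusion `R[x] → R[x, y]`. -/
abbrev inclX : R[X] →ₐ[R] MvPolynomial (Fin 2) R := Polynomial.aeval (X 0)

/-- The substitution `y = h(x)`, as a homomorphism `R[x, y] → R[x]`. -/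
def substY (h : R[X]) : MvPolynomial (Fin 2) R →ₐ[R] R[X] :=
  ((Polynomial.aeval h).restrictScalars R).comp
    (Polynomial.Bivariate.equivMvPolynomial R).symm.toAlgHom

lemma substY_X_one (h : R[X]) : substY h (X 1) = h := by
  simp [substY]

lemma substY_inclX (h p : R[X]) : substY h (inclX p) = p := by
  rw [← Polynomial.aeval_algHom_apply]
  simp [substY]

lemma substY_surjective (h : R[X]) : Function.Surjective (substY h) :=
  fun p ↦ ⟨_, substY_inclX h p⟩

lemma equivMvPolynomial_X_sub_C (h : R[X]) :
    Polynomial.Bivariate.equivMvPolynomial R (Polynomial.X - Polynomial.C h) = X 1 - inclX h := by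
  simp [Polynomial.Bivariate.equivMvPolynomial, Polynomial.aeval_def, Polynomial.eval_map,
    MvPolynomial.algebraMap_eq]

lemma ker_substY (h : R[X]) : RingHom.ker (substY h) = Ideal.span {X 1 - inclX h} := by
  ext p
  obtain ⟨q, rfl⟩ := (Polynomial.Bivariate.equivMvPolynomial R).surjective p
  rw [← equivMvPolynomial_X_sub_C, Ideal.mem_span_singleton, map_dvd_iff,
    Polynomial.dvd_iff_isRoot, RingHom.mem_ker]
  simp [substY, Polynomial.coe_aeval_eq_eval]

lemma isSMulRegular_X_one_sub_inclX (h : R[X]) :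
    IsSMulRegular (MvPolynomial (Fin 2) R) (X 1 - inclX h) := by
  rw [← equivMvPolynomial_X_sub_C]
  have monic_regular : IsSMulRegular R[X][X] (Polynomial.X - Polynomial.C h) :=
    (Polynomial.monic_X_sub_C h).isRegular.left.isSMulRegular
  exact (Equiv.isSMulRegular_congr (e := (Polynomial.Bivariate.equivMvPolynomial R).toEquiv)
    fun p ↦ map_mul (Polynomial.Bivariate.equivMvPolynomial R) _ p).1 monic_regular

lemma isWeaklyRegular_sub_add {h : R[X]} (hh : IsSMulRegular R[X] (2 * h)) :
    IsWeaklyRegular (MvPolynomial (Fin 2) R) [X 1 - inclX h, X 1 + inclX h] := by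
  refine isWeaklyRegular_pair_of_ker_eq_span (isSMulRegular_X_one_sub_inclX h) (ker_substY h) ?_
  have substY_f : substY h (X 1 + inclX h) = 2 * h := by
    rw [map_add, substY_X_one, substY_inclX, two_mul]
  rwa [AlgHom.toRingHom_eq_coe, RingHom.coe_coe, substY_f]

lemma comap_substY_zero (h : R[X]) :
    (Ideal.span {h}).comap (substY 0) = Ideal.span {inclX h, X 1} := by
  have map_span : (Ideal.span {inclX h}).map (substY 0) = Ideal.span {h} := by
    rw [Ideal.map_span, Set.image_singleton, substY_inclX]
  have ker_eq : (⊥ : Ideal R[X]).comap (substY 0) = Ideal.span {X 1} := by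
    simpa [RingHom.ker] using ker_substY (0 : R[X])
  rw [← map_span, Ideal.comap_map_of_surjective _ (substY_surjective 0), ker_eq,
    ← Ideal.span_insert]

/-- The isomorphism `R[x, y]/(y + h(x), y - h(x)) ≅ R[x]/(h)` induced by `y = 0`. -/
def quotientAddSubEquiv (h : R[X]) (h2 : IsUnit (2 : R)) :
    (MvPolynomial (Fin 2) R ⧸ Ideal.span {X 1 + inclX h, X 1 - inclX h}) ≃ₐ[R]
      R[X] ⧸ Ideal.span {h} :=
  let φ := (Ideal.Quotient.mkₐ R (Ideal.span {h})).comp (substY 0)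
  have ker_φ : Ideal.span {X 1 + inclX h, X 1 - inclX h} = RingHom.ker φ := by
    have h2' : IsUnit (2 : MvPolynomial (Fin 2) R) :=
      map_ofNat (algebraMap R (MvPolynomial (Fin 2) R)) 2 ▸ h2.map _
    rw [span_add_sub_eq_span_pair h2', ← comap_substY_zero, ← AlgHom.comap_ker]
    exact congrArg _ Ideal.mk_ker.symm
  (Ideal.quotientEquivAlgOfEq R ker_φ).trans <| Ideal.quotientKerAlgEquivOfSurjective (f := φ) <|
    (Ideal.Quotient.mkₐ_surjective R _).comp (substY_surjective 0)

theorem stmt12_general {h : R[X]} {f g : MvPolynomial (Fin 2) R} (h2 : IsUnit (2 : R))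
    (hh : IsSMulRegular R[X] h) (hf : f = X 1 + inclX h) (hg : g = X 1 - inclX h) :
    (koszulD₁ f g ∘ₗ wordD f g 2 = 0) ∧
    (∀ m : ℕ, 2 ≤ m → wordD f g m ∘ₗ wordD f g (m + 1) = 0) ∧
    Nonempty ((MvPolynomial (Fin 2) R ⧸ LinearMap.range (koszulD₁ f g)) ≃ₗ[R]
      R[X] ⧸ Ideal.span {h}) ∧
    (LinearMap.ker (koszulD₁ f g) = LinearMap.range (wordD f g 2)) ∧
    (∀ m : ℕ, 3 ≤ m → Odd m →
      LinearMap.ker (wordD f g m) = LinearMap.range (wordD f g (m + 1))) ∧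
    (∀ m : ℕ, 2 ≤ m → Even m →
      Nonempty
        ((↥(LinearMap.ker (wordD f g m)) ⧸
            (LinearMap.range (wordD f g (m + 1))).comap (LinearMap.ker (wordD f g m)).subtype)
          ≃ₗ[R] R[X] ⧸ Ideal.span {h})) := by
  have two_mul_regular : IsSMulRegular R[X] (2 * h) := by
    rw [two_mul, ← two_smul R]
    exact (h2.isSMulRegular R[X]).smul hh
  have hgf : IsWeaklyRegular (MvPolynomial (Fin 2) R) [g, f] :=
    hf ▸ hg ▸ isWeaklyRegular_sub_add two_mul_regular
  have hg_reg : IsSMulRegular (MvPolynomial (Fin 2) R) g := (isWeaklyRegular_pair_iff.1 hgf).1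
  have range_eq : LinearMap.range (koszulD₁ f g) =
      Ideal.span {X 1 + inclX h, X 1 - inclX h} := by
    rw [range_koszulD₁, hf, hg]
  let e₀ : (MvPolynomial (Fin 2) R ⧸ LinearMap.range (koszulD₁ f g)) ≃ₗ[R]
      R[X] ⧸ Ideal.span {h} :=
    ((Submodule.quotEquivOfEq _ _ range_eq).restrictScalars R).trans
      (quotientAddSubEquiv h h2).toLinearEquiv
  refine ⟨koszulD₁_comp_wordD_of_even even_two, fun m _ ↦ wordD_comp_wordD m, ⟨e₀⟩, ?_,
    fun m _ hm ↦ ?_, fun m _ hm ↦ ?_⟩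
  · rw [ker_koszulD₁ hgf, range_wordD_of_even even_two]
  · rw [ker_wordD_of_odd hm, ker_koszulD₁ hgf, range_wordD_of_even hm.add_one]
  · exact ⟨((quotientEquivEvenCohomology hg_reg hm).symm.restrictScalars R).trans e₀⟩

end Pagoda

lemma d1_eq_koszulD₁ (k : Type) [Field k] (N : ℕ) : d1 k N = koszulD₁ (fP k N) (gP k N) := rfl

lemma D_eq_wordD (k : Type) [Field k] (N : ℕ) : D k N = wordD (fP k N) (gP k N) := by
  funext m
  rcases m.even_or_odd with hm | hm
  · rw [D, if_pos hm, wordD_of_even hm]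
    ext <;> simp [dEven, koszulD₂_apply]
  · rw [D, if_neg (Nat.not_even_iff_odd.2 hm), wordD_of_odd hm]
    rfl

/-- The cohomology of the derived contraction algebra of the Pagoda flop
`uv = (y+x^N)(y-x^N)` in characteristic `≠ 2`: `d ∘ d = 0`, `H⁰(C) ≅ k[x]/(x^N)`,
`H^{-m}(C) = 0` for odd `m ≥ 1`, and `H^{-m}(C) ≅ k[x]/(x^N)` for even `m ≥ 2`. -/
theorem stmt12 (k : Type) [Field k] (hchar : (2 : k) ≠ 0) (N : ℕ) (hN : 1 ≤ N) :
    -- d ∘ d = 0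
    (d1 k N ∘ₗ D k N 2 = 0) ∧
    (∀ m : ℕ, 2 ≤ m → D k N m ∘ₗ D k N (m + 1) = 0) ∧
    -- H⁰(C) ≅ k[x]/(x^N)
    Nonempty ((Sk k ⧸ LinearMap.range (d1 k N)) ≃ₗ[k] Qmod k N) ∧
    -- H^{-m}(C) = 0 for odd m ≥ 1
    (LinearMap.ker (d1 k N) = LinearMap.range (D k N 2)) ∧
    (∀ m : ℕ, 3 ≤ m → Odd m →
      LinearMap.ker (D k N m) = LinearMap.range (D k N (m + 1))) ∧
    -- H^{-m}(C) ≅ k[x]/(x^N) for even m ≥ 2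
    (∀ m : ℕ, 2 ≤ m → Even m →
      Nonempty
        ((↥(LinearMap.ker (D k N m)) ⧸
            (LinearMap.range (D k N (m + 1))).comap (LinearMap.ker (D k N m)).subtype)
          ≃ₗ[k] Qmod k N)) := by
  rw [d1_eq_koszulD₁, D_eq_wordD]
  exact stmt12_general hchar.isUnit (Polynomial.isRegular_X_pow N).left.isSMulRegular
    (by simp [fP]) (by simp [gP])
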